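/- Let p ≥ 1 and let k = 2i+1 be odd with 0 ≤ i ≤ p−1. For every partition x_0 < x_1 < ⋯ < x_N of an interval [x_0,x_N] and every 2p-times continuously differentiable function g : [x_0,x_N] → ℝ, the piecewise Lidstone interpolant L^Δ g of g satisfies max_{1 ≤ n ≤ N} sup_{x ∈ (x_{n−1},x_n)} |(g − L^Δ g)^{(k)}(x)| ≤ 2 d · ‖g^{(2p)}‖_∞ · ‖Δ‖^{2p−k}, where d = (−1)^{p−i+1} · 2(2^{2p−2i} − 1) · B_{2p−2i} / (2p−2i)!, B_m denotes the m-th Bernoulli number, ‖Δ‖ = max_{1 ≤ n ≤ N} (x_n − x_{n−1}), and ‖g^{(2p)}‖_∞ = sup_{x ∈ [x_0,x_N]} |g^{(2p)}(x)|. -/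

import Mathlib

/-- The defining property of the sequence of Lidstone polynomial functions. -/
def LidstoneProp (Λ : ℕ → ℝ → ℝ) : Prop :=
  (∀ l : ℕ, ∃ P : Polynomial ℝ, ∀ x : ℝ, Λ l x = P.eval x) ∧
  (∀ x : ℝ, Λ 0 x = x) ∧
  (∀ l : ℕ, (∀ x : ℝ, iteratedDeriv 2 (Λ (l + 1)) x = Λ l x) ∧
    Λ (l + 1) 0 = 0 ∧ Λ (l + 1) 1 = 0)

/-! On a subinterval `[a, b]` the error `f = g - L g` has vanishing even derivatives of order
below `2p` at both endpoints, and `f^(2p)`, which is `g^(2p)` minus its linear interpolant, is at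
most `2M` in absolute value. Let `q_m` be the polynomial with `(-1)^m q_m^(2m) = 1` whose even
derivatives of order below `2m` vanish at `a` and `b`, so that `q_(m+1)'' = -q_m`. If `|f''| ≤ -K
q_(m+1)''` then `K q_(m+1) ± f` are concave, hence `|f| ≤ K q_(m+1)`; by induction this compares
`f^(2i)` with `2M q_(p-i)`. Adding tangent-line inequalities for the two concave functions
moreover gives `|f'| ≤ K q_(m+1)'(a)`. The Lidstone polynomials are rescaled Bernoulli
polynomials, which evaluates `q_m'(a)` to `d (b - a)^(2m-1)`. -/

section PolynomialUniqueness

open Polynomial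

variable {R : Type*} [CommRing R] [IsDomain R] [CharZero R]

lemma eq_of_derivative_derivative_eq_of_eval_eq {P Q : R[X]} {a b : R} (hab : a ≠ b)
    (h : derivative (derivative P) = derivative (derivative Q))
    (ha : P.eval a = Q.eval a) (hb : P.eval b = Q.eval b) : P = Q := by
  classical
  have hdeg : (P - Q).natDegree < 2 := by
    have hsub : derivative (derivative (P - Q)) = 0 := by simp only [derivative_sub, h, sub_self]
    rw [derivative_eq_zero, natDegree_derivative] at hsub
    omega
  refine sub_eq_zero.1 (eq_zero_of_natDegree_lt_card_of_eval_eq_zero' _ {a, b} ?_ ?_)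
  · simp [ha, hb]
  · rwa [Finset.card_pair hab]

end PolynomialUniqueness

section LidstonePolynomials

open Polynomial (C X derivative)
open scoped Polynomial

/-- The Appell sequence `2ⁿ Bₙ((1 + X) / 2) / n!`, with `Bₙ` the Bernoulli polynomials. Its members
of odd index are the Lidstone polynomials. -/
noncomputable def halfScaledBernoulli (n : ℕ) : ℝ[X] :=
  C ((2 : ℝ) ^ n / n.factorial) *
    ((Polynomial.bernoulli n).map (algebraMap ℚ ℝ)).comp (C 2⁻¹ * (1 + X))

lemma halfScaledBernoulli_eval (n : ℕ) (t : ℝ) :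
    (halfScaledBernoulli n).eval t =
      2 ^ n / n.factorial * bernoulliFun n (2⁻¹ * (1 + t)) := by
  simp [halfScaledBernoulli, bernoulliFun]

lemma derivative_halfScaledBernoulli_succ (n : ℕ) :
    derivative (halfScaledBernoulli (n + 1)) = halfScaledBernoulli n := by
  have hcoeff : (2 : ℝ) ^ (n + 1) / (n + 1).factorial * (2⁻¹ * (n + 1)) = 2 ^ n / n.factorial := by
    rw [Nat.factorial_succ]
    push_cast
    field_simp
    ring
  rw [halfScaledBernoulli, halfScaledBernoulli, ← hcoeff, Polynomial.derivative_C_mul,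
    Polynomial.derivative_comp, Polynomial.derivative_map, Polynomial.derivative_bernoulli_add_one]
  simp only [Polynomial.derivative_C_mul, Polynomial.derivative_one, Polynomial.derivative_X,
    Polynomial.map_mul, Polynomial.map_add, Polynomial.map_natCast, Polynomial.map_one,
    Polynomial.mul_comp, Polynomial.add_comp, Polynomial.natCast_comp, Polynomial.one_comp, map_mul,
    map_add, map_natCast, map_one]
  ring

/-- The `l`-th Lidstone polynomial `Λ_l`, in its closed form through Bernoulli polynomials. -/
noncomputable def lidstonePoly (l : ℕ) : ℝ[X] :=
  halfScaledBernoulli (2 * l + 1)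

lemma derivative_derivative_lidstonePoly_succ (l : ℕ) :
    derivative (derivative (lidstonePoly (l + 1))) = lidstonePoly l := by
  simp only [lidstonePoly, mul_add, mul_one, derivative_halfScaledBernoulli_succ]

lemma lidstonePoly_zero : lidstonePoly 0 = X := by
  refine Polynomial.funext fun t => ?_
  simp only [lidstonePoly, mul_zero, zero_add, halfScaledBernoulli_eval, pow_one,
    Nat.factorial_one, Nat.cast_one, div_one, bernoulliFun_one, Polynomial.eval_X]
  ring

lemma lidstonePoly_eval_zero (l : ℕ) : (lidstonePoly l).eval 0 = 0 := by
  simp [lidstonePoly, halfScaledBernoulli_eval, bernoulliFun_eval_half_eq_zero]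

lemma lidstonePoly_succ_eval_one (l : ℕ) : (lidstonePoly (l + 1)).eval 1 = 0 := by
  have hodd : bernoulli (2 * (l + 1) + 1) = 0 :=
    bernoulli_eq_zero_of_odd (odd_two_mul_add_one _) (by omega)
  have hone : (2⁻¹ : ℝ) * (1 + 1) = 1 := by norm_num
  simp [lidstonePoly, halfScaledBernoulli_eval, hone, bernoulliFun_eval_one,
    bernoulliFun_eval_zero, hodd]

lemma LidstoneProp.eq_eval_lidstonePoly {Λ : ℕ → ℝ → ℝ} (hΛ : LidstoneProp Λ) (l : ℕ) :
    Λ l = fun t => (lidstonePoly l).eval t := by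
  obtain ⟨hpoly, hzero, hsucc⟩ := hΛ
  induction l with
  | zero => ext t; simp [hzero, lidstonePoly_zero]
  | succ l ih =>
    obtain ⟨P, hP⟩ := hpoly (l + 1)
    obtain ⟨hderiv, heval_zero, heval_one⟩ := hsucc l
    suffices P = lidstonePoly (l + 1) by ext t; rw [hP, this]
    refine eq_of_derivative_derivative_eq_of_eval_eq zero_ne_one ?_ ?_ ?_
    · refine Polynomial.funext fun t => ?_
      have hP' : deriv (fun x => P.eval x) = fun x => (derivative P).eval x :=
        funext fun _ => P.deriv
      rw [derivative_derivative_lidstonePoly_succ, ← congrFun ih t, ← hderiv, funext hP,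
        iteratedDeriv_succ, iteratedDeriv_one, hP', Polynomial.deriv]
    · rw [← hP, heval_zero, lidstonePoly_eval_zero]
    · rw [← hP, heval_one, lidstonePoly_succ_eval_one]

/-- The constant `d` of the error bound, for the index `m = p - i`. -/
noncomputable def lidstoneConst (m : ℕ) : ℝ :=
  (-1 : ℝ) ^ (m + 1) * (2 * ((2 : ℝ) ^ (2 * m) - 1)) * ((bernoulli (2 * m) : ℚ) : ℝ) /
    (2 * m).factorial

lemma derivative_lidstonePoly_eval_zero_sub_eval_one (m : ℕ) :
    (derivative (lidstonePoly m)).eval 0 - (derivative (lidstonePoly m)).eval 1 =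
      (-1) ^ m * lidstoneConst m := by
  have hone : (2⁻¹ : ℝ) * (1 + 1) = 1 := by norm_num
  have hsign : ((-1 : ℝ) ^ m) * (-1) ^ (m + 1) = -1 := by
    rw [pow_succ, ← mul_assoc, ← mul_pow]
    norm_num
  have hconst : (-1) ^ m * lidstoneConst m =
      -(2 * ((2 : ℝ) ^ (2 * m) - 1) * (bernoulli (2 * m) : ℚ) / (2 * m).factorial) := by
    rw [lidstoneConst, mul_div_assoc', ← mul_assoc, ← mul_assoc, hsign]
    ring
  rw [hconst, lidstonePoly, derivative_halfScaledBernoulli_succ, halfScaledBernoulli_eval,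
    halfScaledBernoulli_eval, add_zero, mul_one, hone, bernoulliFun_eval_half,
    bernoulliFun_eval_one, if_neg (by omega), bernoulliFun_eval_zero]
  field_simp
  ring

/-- The Lidstone polynomial `(b - a)^(2l) Λ_l((t - a) / (b - a))` of the interval from `a` to `b`.
Swapping `a` and `b` reflects the interval, so `lidstoneOn b a` covers the terms
`Λ_l((b - t) / (b - a))` of the interpolant. -/
noncomputable def lidstoneOn (a b : ℝ) (l : ℕ) : ℝ[X] :=
  C ((b - a) ^ (2 * l)) * (lidstonePoly l).comp (C (b - a)⁻¹ * (X - C a))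

variable {a b : ℝ}

lemma lidstoneOn_eval (a b t : ℝ) (l : ℕ) :
    (lidstoneOn a b l).eval t = (b - a) ^ (2 * l) * (lidstonePoly l).eval ((t - a) / (b - a)) := by
  simp [lidstoneOn, div_eq_inv_mul]

lemma derivative_lidstoneOn (a b : ℝ) (l : ℕ) :
    derivative (lidstoneOn a b l) =
      C ((b - a) ^ (2 * l) * (b - a)⁻¹) *
        (derivative (lidstonePoly l)).comp (C (b - a)⁻¹ * (X - C a)) := by
  simp only [lidstoneOn, Polynomial.derivative_C_mul, Polynomial.derivative_comp,
    Polynomial.derivative_X_sub_C, C.map_mul]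
  ring

lemma derivative_derivative_lidstoneOn_succ (hab : a ≠ b) (l : ℕ) :
    derivative (derivative (lidstoneOn a b (l + 1))) = lidstoneOn a b l := by
  have hcoeff : (b - a) ^ (2 * (l + 1)) * (b - a)⁻¹ * (b - a)⁻¹ = (b - a) ^ (2 * l) := by
    have := sub_ne_zero.2 hab.symm
    field_simp
    ring
  rw [derivative_lidstoneOn, Polynomial.derivative_C_mul, Polynomial.derivative_comp,
    derivative_derivative_lidstonePoly_succ, Polynomial.derivative_C_mul,
    Polynomial.derivative_X_sub_C, lidstoneOn, ← hcoeff, C.map_mul (_ * _)]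
  ring

lemma derivative_derivative_lidstoneOn_zero (a b : ℝ) :
    derivative (derivative (lidstoneOn a b 0)) = 0 := by
  simp [derivative_lidstoneOn, lidstonePoly_zero]

lemma lidstoneOn_eval_left (a b : ℝ) (l : ℕ) : (lidstoneOn a b l).eval a = 0 := by
  simp [lidstoneOn_eval, lidstonePoly_eval_zero]

lemma lidstoneOn_succ_eval_right (hab : a ≠ b) (l : ℕ) : (lidstoneOn a b (l + 1)).eval b = 0 := by
  simp [lidstoneOn_eval, div_self (sub_ne_zero.2 hab.symm), lidstonePoly_succ_eval_one]

lemma lidstoneOn_zero_eval (a b t : ℝ) : (lidstoneOn a b 0).eval t = (t - a) / (b - a) := by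
  simp [lidstoneOn_eval, lidstonePoly_zero]

end LidstonePolynomials

section LidstoneInterpolant

open Polynomial (C derivative)
open scoped Polynomial

/-- The Lidstone interpolation polynomial on `[a, b]` of degree at most `2p + 1`, whose derivatives
of order `2l` with `l ≤ p` take the values `c l` at `a` and `d l` at `b`. -/
noncomputable def lidstoneInterpolant (p : ℕ) (a b : ℝ) (c d : ℕ → ℝ) : ℝ[X] :=
  ∑ l ∈ Finset.range (p + 1), (C (c l) * lidstoneOn b a l + C (d l) * lidstoneOn a b l)

variable {a b : ℝ}

lemma lidstoneInterpolant_eval (p : ℕ) (a b : ℝ) (c d : ℕ → ℝ) (t : ℝ) :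
    (lidstoneInterpolant p a b c d).eval t = ∑ l ∈ Finset.range (p + 1),
      (c l * (lidstonePoly l).eval ((b - t) / (b - a)) +
        d l * (lidstonePoly l).eval ((t - a) / (b - a))) * (b - a) ^ (2 * l) := by
  rw [lidstoneInterpolant, Polynomial.eval_finsetSum]
  refine Finset.sum_congr rfl fun l _ => ?_
  have hpow : (a - b) ^ (2 * l) = (b - a) ^ (2 * l) := by
    rw [← neg_sub b a, (even_two_mul l).neg_pow]
  have hdiv : (t - b) / (a - b) = (b - t) / (b - a) := by
    rw [← neg_sub b t, ← neg_sub b a, neg_div_neg_eq]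
  simp only [Polynomial.eval_add, Polynomial.eval_mul, Polynomial.eval_C, lidstoneOn_eval, hpow,
    hdiv]
  ring

lemma derivative_derivative_lidstoneInterpolant_succ (hab : a ≠ b) (p : ℕ) (c d : ℕ → ℝ) :
    derivative (derivative (lidstoneInterpolant (p + 1) a b c d)) =
      lidstoneInterpolant p a b (fun l => c (l + 1)) (fun l => d (l + 1)) := by
  simp only [lidstoneInterpolant, Finset.sum_range_succ' _ (p + 1), Polynomial.derivative_sum,
    Polynomial.derivative_add, Polynomial.derivative_C_mul,
    derivative_derivative_lidstoneOn_succ hab, derivative_derivative_lidstoneOn_succ hab.symm,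
    derivative_derivative_lidstoneOn_zero, mul_zero, add_zero]

lemma iterate_derivative_lidstoneInterpolant_add (hab : a ≠ b) (p j : ℕ) (c d : ℕ → ℝ) :
    derivative^[2 * j] (lidstoneInterpolant (p + j) a b c d) =
      lidstoneInterpolant p a b (fun l => c (l + j)) (fun l => d (l + j)) := by
  induction j generalizing c d with
  | zero => rfl
  | succ j ih =>
    change derivative^[2 * j]
      (derivative (derivative (lidstoneInterpolant (p + j + 1) a b c d))) = _
    rw [derivative_derivative_lidstoneInterpolant_succ hab, ih]
    rfl

lemma lidstoneInterpolant_eval_left (hab : a ≠ b) (p : ℕ) (c d : ℕ → ℝ) :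
    (lidstoneInterpolant p a b c d).eval a = c 0 := by
  simp [lidstoneInterpolant, Finset.sum_range_succ', Polynomial.eval_finsetSum,
    lidstoneOn_eval_left, lidstoneOn_succ_eval_right hab.symm, lidstoneOn_zero_eval,
    div_self (sub_ne_zero.2 hab)]

lemma lidstoneInterpolant_eval_right (hab : a ≠ b) (p : ℕ) (c d : ℕ → ℝ) :
    (lidstoneInterpolant p a b c d).eval b = d 0 := by
  simp [lidstoneInterpolant, Finset.sum_range_succ', Polynomial.eval_finsetSum,
    lidstoneOn_eval_left, lidstoneOn_succ_eval_right hab, lidstoneOn_zero_eval,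
    div_self (sub_ne_zero.2 hab.symm)]

lemma abs_lidstoneInterpolant_zero_eval_le {M t : ℝ} {c d : ℕ → ℝ} (hab : a < b)
    (ht : t ∈ Set.Icc a b) (hc : |c 0| ≤ M) (hd : |d 0| ≤ M) :
    |(lidstoneInterpolant 0 a b c d).eval t| ≤ M := by
  have hlen : 0 < b - a := sub_pos.2 hab
  have hleft : 0 ≤ (b - t) / (b - a) := div_nonneg (sub_nonneg.2 ht.2) hlen.le
  have hright : 0 ≤ (t - a) / (b - a) := div_nonneg (sub_nonneg.2 ht.1) hlen.le
  have hsum : (b - t) / (b - a) + (t - a) / (b - a) = 1 := by field_simp; ring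
  have hval : (lidstoneInterpolant 0 a b c d).eval t =
      c 0 * ((b - t) / (b - a)) + d 0 * ((t - a) / (b - a)) := by
    simp [lidstoneInterpolant_eval, lidstonePoly_zero]
  rw [hval]
  calc |c 0 * ((b - t) / (b - a)) + d 0 * ((t - a) / (b - a))|
      ≤ |c 0| * ((b - t) / (b - a)) + |d 0| * ((t - a) / (b - a)) := by
        refine (abs_add_le _ _).trans_eq ?_
        rw [abs_mul, abs_mul, abs_of_nonneg hleft, abs_of_nonneg hright]
    _ ≤ M * ((b - t) / (b - a)) + M * ((t - a) / (b - a)) := by gcongr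
    _ = M := by rw [← mul_add, hsum, mul_one]

end LidstoneInterpolant

section LidstoneMajorant

open Polynomial (C derivative)
open scoped Polynomial

/-- The solution `q` of `(-1)^m q^(2m) = 1` on `[a, b]` whose derivatives of even order below `2m`
vanish at both endpoints. It dominates every `f` with the same boundary behaviour and
`|f^(2m)| ≤ 1`. -/
noncomputable def lidstoneMajorant (a b : ℝ) (m : ℕ) : ℝ[X] :=
  C ((-1 : ℝ) ^ m) * (lidstoneOn a b m + lidstoneOn b a m)

variable {a b : ℝ}

lemma lidstoneMajorant_zero_eval (hab : a ≠ b) (t : ℝ) : (lidstoneMajorant a b 0).eval t = 1 := by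
  have hne : b - a ≠ 0 := sub_ne_zero.2 hab.symm
  simp only [lidstoneMajorant, pow_zero, map_one, one_mul, Polynomial.eval_add,
    lidstoneOn_zero_eval]
  rw [← neg_sub b t, ← neg_sub b a, neg_div_neg_eq]
  field_simp
  ring

lemma derivative_derivative_lidstoneMajorant_succ (hab : a ≠ b) (m : ℕ) :
    derivative (derivative (lidstoneMajorant a b (m + 1))) = -lidstoneMajorant a b m := by
  simp only [lidstoneMajorant, Polynomial.derivative_C_mul, Polynomial.derivative_add,
    derivative_derivative_lidstoneOn_succ hab, derivative_derivative_lidstoneOn_succ hab.symm,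
    pow_succ, mul_neg, mul_one, map_neg, neg_mul]

lemma lidstoneMajorant_succ_eval_left (hab : a ≠ b) (m : ℕ) :
    (lidstoneMajorant a b (m + 1)).eval a = 0 := by
  simp [lidstoneMajorant, lidstoneOn_eval_left, lidstoneOn_succ_eval_right hab.symm]

lemma lidstoneMajorant_comm (a b : ℝ) (m : ℕ) :
    lidstoneMajorant a b m = lidstoneMajorant b a m := by
  rw [lidstoneMajorant, lidstoneMajorant, add_comm]

lemma lidstoneMajorant_succ_eval_right (hab : a ≠ b) (m : ℕ) :
    (lidstoneMajorant a b (m + 1)).eval b = 0 := by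
  rw [lidstoneMajorant_comm, lidstoneMajorant_succ_eval_left hab.symm]

lemma derivative_lidstoneMajorant_succ_eval_left (hab : a ≠ b) (m : ℕ) :
    (derivative (lidstoneMajorant a b (m + 1))).eval a =
      lidstoneConst (m + 1) * (b - a) ^ (2 * m + 1) := by
  have hne : b - a ≠ 0 := sub_ne_zero.2 hab.symm
  have hpow : (b - a) ^ (2 * (m + 1)) * (b - a)⁻¹ = (b - a) ^ (2 * m + 1) := by
    field_simp
    ring
  have hpow' : (a - b) ^ (2 * (m + 1)) * (a - b)⁻¹ = -(b - a) ^ (2 * m + 1) := by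
    rw [← neg_sub b a, (even_two_mul (m + 1)).neg_pow, inv_neg, mul_neg, hpow]
  have hdiff := derivative_lidstonePoly_eval_zero_sub_eval_one (m + 1)
  have hsign : ((-1 : ℝ) ^ (m + 1)) * (-1) ^ (m + 1) = 1 := by
    rw [← mul_pow]
    norm_num
  simp only [lidstoneMajorant, Polynomial.derivative_C_mul, Polynomial.derivative_add,
    derivative_lidstoneOn, hpow, hpow', Polynomial.eval_mul, Polynomial.eval_C,
    Polynomial.eval_add, Polynomial.eval_comp, Polynomial.eval_sub, Polynomial.eval_X, sub_self,
    mul_zero, inv_mul_cancel₀ (sub_ne_zero.2 hab)]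
  linear_combination (-1 : ℝ) ^ (m + 1) * (b - a) ^ (2 * m + 1) * hdiff +
    (b - a) ^ (2 * m + 1) * lidstoneConst (m + 1) * hsign

lemma derivative_lidstoneMajorant_succ_eval_right (hab : a ≠ b) (m : ℕ) :
    (derivative (lidstoneMajorant a b (m + 1))).eval b =
      -(lidstoneConst (m + 1) * (b - a) ^ (2 * m + 1)) := by
  rw [lidstoneMajorant_comm, derivative_lidstoneMajorant_succ_eval_left hab.symm, ← neg_sub b a,
    (odd_two_mul_add_one m).neg_pow, mul_neg]

end LidstoneMajorant

section IteratedDerivWithin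

variable {𝕜 F : Type*} [NontriviallyNormedField 𝕜] [NormedAddCommGroup F] [NormedSpace 𝕜 F]
  {s t : Set 𝕜} {f : 𝕜 → F} {x : 𝕜} {n : ℕ}

lemma iteratedDerivWithin_iteratedDerivWithin (m n : ℕ) (f : 𝕜 → F) (s : Set 𝕜) :
    iteratedDerivWithin m (iteratedDerivWithin n f s) s = iteratedDerivWithin (m + n) f s := by
  induction m with
  | zero => rw [iteratedDerivWithin_zero, zero_add]
  | succ m ih => rw [iteratedDerivWithin_succ, ih, Nat.succ_add, iteratedDerivWithin_succ]

lemma contDiffOn_iteratedDerivWithin {m : ℕ} (hf : ContDiffOn 𝕜 (m + n : ℕ) f s)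
    (hs : UniqueDiffOn 𝕜 s) : ContDiffOn 𝕜 m (iteratedDerivWithin n f s) s := by
  rw [contDiffOn_nat_iff_continuousOn_differentiableOn_deriv hs] at hf ⊢
  simp only [iteratedDerivWithin_iteratedDerivWithin]
  exact ⟨fun k hk => hf.1 _ (by omega), fun k hk => hf.2 _ (by omega)⟩

lemma iteratedDerivWithin_subset (hst : s ⊆ t) (hs : UniqueDiffOn 𝕜 s) (ht : UniqueDiffOn 𝕜 t)
    (hf : ContDiffOn 𝕜 n f t) (hx : x ∈ s) :
    iteratedDerivWithin n f s x = iteratedDerivWithin n f t x :=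
  congr($(iteratedFDerivWithin_subset hst hs ht hf hx) _)

lemma iteratedDerivWithin_congr_set (hst : s =ᶠ[nhds x] t) (n : ℕ) (f : 𝕜 → F) :
    iteratedDerivWithin n f s x = iteratedDerivWithin n f t x :=
  congr($(iteratedFDerivWithin_congr_set hst n) _)

lemma contDiff_polynomial_eval (P : Polynomial 𝕜) (n : WithTop ℕ∞) :
    ContDiff 𝕜 n (fun y => P.eval y) :=
  P.contDiff_aeval n

lemma iteratedDerivWithin_polynomial_eval (hs : UniqueDiffOn 𝕜 s) (P : Polynomial 𝕜) (n : ℕ)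
    (hx : x ∈ s) :
    iteratedDerivWithin n (fun y => P.eval y) s x = (Polynomial.derivative^[n] P).eval x := by
  induction n generalizing P with
  | zero => simp
  | succ n ih =>
    have hderiv : Set.EqOn (derivWithin (fun y => P.eval y) s)
        (fun y => (Polynomial.derivative P).eval y) s := fun y hy => P.derivWithin (hs y hy)
    rw [iteratedDerivWithin_succ', iteratedDerivWithin_congr hderiv hx, ih,
      Function.iterate_succ_apply]

end IteratedDerivWithin

section Concavity

open Set

lemma concaveOn_le_add_mul_sub {S : Set ℝ} {w : ℝ → ℝ} {w' x y : ℝ} (hw : ConcaveOn ℝ S w)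
    (hx : x ∈ S) (hy : y ∈ S) (hw' : HasDerivWithinAt w w' S x) :
    w y ≤ w x + w' * (y - x) := by
  rcases lt_trichotomy x y with hxy | rfl | hyx
  · have := hw.slope_le_of_hasDerivWithinAt hx hy hxy hw'
    rw [slope_def_field, div_le_iff₀ (sub_pos.2 hxy)] at this
    linarith
  · simp
  · have := hw.le_slope_of_hasDerivWithinAt hy hx hyx hw'
    rw [slope_def_field, le_div_iff₀ (sub_pos.2 hyx)] at this
    linarith

lemma concaveOn_of_iteratedDerivWithin_two_nonpos {D : Set ℝ} {w : ℝ → ℝ} (hD : Convex ℝ D)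
    (hD' : UniqueDiffOn ℝ D) (hw : ContDiffOn ℝ 2 w D)
    (hw'' : ∀ t ∈ interior D, iteratedDerivWithin 2 w D t ≤ 0) : ConcaveOn ℝ D w := by
  refine concaveOn_of_hasDerivWithinAt2_nonpos (f' := iteratedDerivWithin 1 w D) hD hw.continuousOn
    (fun t ht => ?_) (fun t ht => ?_) hw''
  · rw [iteratedDerivWithin_one]
    exact (hw.differentiableOn two_ne_zero t (interior_subset ht)).hasDerivWithinAt.mono
      interior_subset
  · rw [iteratedDerivWithin_succ (n := 1)]
    exact (hw.differentiableOn_iteratedDerivWithin (m := 1) (by norm_num) hD' t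
      (interior_subset ht)).hasDerivWithinAt.mono interior_subset

variable {a b t : ℝ} {φ : ℝ → ℝ}

-- For `t` left of the midpoint compare with the tangent at `a`, otherwise with the one at `b`.
lemma concaveOn_two_mul_add_mul_derivWithin_le (hφ : ConcaveOn ℝ (Icc a b) φ)
    (hφ' : DifferentiableOn ℝ φ (Icc a b)) (hφa : φ a = 0) (hφb : φ b = 0) (ht : t ∈ Icc a b) :
    2 * φ t + (a + b - 2 * t) * derivWithin φ (Icc a b) t ≤
      (b - a) * max (derivWithin φ (Icc a b) a) (-derivWithin φ (Icc a b) b) := by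
  have hab : a ≤ b := ht.1.trans ht.2
  have ha : a ∈ Icc a b := left_mem_Icc.2 hab
  have hb : b ∈ Icc a b := right_mem_Icc.2 hab
  have hanti := hφ.antitoneOn_derivWithin hφ'
  rcases le_total (2 * t) (a + b) with hmid | hmid
  · have htangent := concaveOn_le_add_mul_sub hφ ha ht (hφ' a ha).hasDerivWithinAt
    have hslope := mul_le_mul_of_nonneg_left (hanti ha ht ht.1) (sub_nonneg.2 hmid)
    refine le_trans ?_ (mul_le_mul_of_nonneg_left (le_max_left _ _) (sub_nonneg.2 hab))
    linarith
  · have htangent := concaveOn_le_add_mul_sub hφ hb ht (hφ' b hb).hasDerivWithinAt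
    have hslope := mul_le_mul_of_nonneg_left (hanti ht hb ht.2) (sub_nonneg.2 hmid)
    refine le_trans ?_ (mul_le_mul_of_nonneg_left (le_max_right _ _) (sub_nonneg.2 hab))
    linarith

end Concavity

section Comparison

open Set

variable {a b t : ℝ} {φ f : ℝ → ℝ}

lemma concaveOn_add_of_abs_iteratedDerivWithin_two_le (hab : a < b)
    (hf : ContDiffOn ℝ 2 f (Icc a b)) (hφ : ContDiffOn ℝ 2 φ (Icc a b))
    (h : ∀ s ∈ Icc a b,
      |iteratedDerivWithin 2 f (Icc a b) s| ≤ -iteratedDerivWithin 2 φ (Icc a b) s) :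
    ConcaveOn ℝ (Icc a b) (φ + f) := by
  refine concaveOn_of_iteratedDerivWithin_two_nonpos (convex_Icc a b) (uniqueDiffOn_Icc hab)
    (hφ.add hf) fun s hs => ?_
  have hs := interior_subset hs
  rw [iteratedDerivWithin_add hs (uniqueDiffOn_Icc hab) (hφ s hs) (hf s hs)]
  linarith [(abs_le.1 (h s hs)).2]

lemma concaveOn_sub_of_abs_iteratedDerivWithin_two_le (hab : a < b)
    (hf : ContDiffOn ℝ 2 f (Icc a b)) (hφ : ContDiffOn ℝ 2 φ (Icc a b))
    (h : ∀ s ∈ Icc a b,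
      |iteratedDerivWithin 2 f (Icc a b) s| ≤ -iteratedDerivWithin 2 φ (Icc a b) s) :
    ConcaveOn ℝ (Icc a b) (φ - f) := by
  rw [sub_eq_add_neg]
  refine concaveOn_add_of_abs_iteratedDerivWithin_two_le hab hf.neg hφ fun s hs => ?_
  simpa only [iteratedDerivWithin_neg, abs_neg] using h s hs

lemma abs_le_of_abs_iteratedDerivWithin_two_le (hab : a < b)
    (hf : ContDiffOn ℝ 2 f (Icc a b)) (hφ : ContDiffOn ℝ 2 φ (Icc a b))
    (hfa : f a = 0) (hfb : f b = 0) (hφa : φ a = 0) (hφb : φ b = 0)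
    (h : ∀ s ∈ Icc a b,
      |iteratedDerivWithin 2 f (Icc a b) s| ≤ -iteratedDerivWithin 2 φ (Icc a b) s)
    (ht : t ∈ Icc a b) : |f t| ≤ φ t := by
  have ha : a ∈ Icc a b := left_mem_Icc.2 hab.le
  have hb : b ∈ Icc a b := right_mem_Icc.2 hab.le
  have hadd :=
    (concaveOn_add_of_abs_iteratedDerivWithin_two_le hab hf hφ h).min_le_of_mem_Icc ha hb ht
  have hsub :=
    (concaveOn_sub_of_abs_iteratedDerivWithin_two_le hab hf hφ h).min_le_of_mem_Icc ha hb ht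
  simp only [Pi.add_apply, Pi.sub_apply, hfa, hfb, hφa, hφb, add_zero, sub_zero, min_self]
    at hadd hsub
  exact abs_le.2 ⟨by linarith, by linarith⟩

-- Add the tangent inequality of `φ + f` at `t`, evaluated at `a`, to that of `φ - f`, evaluated
-- at `b`: the values `f t` cancel and only `(b - a) * f' t` remains.
lemma mul_derivWithin_le_of_abs_iteratedDerivWithin_two_le (hab : a < b)
    (hf : ContDiffOn ℝ 2 f (Icc a b)) (hφ : ContDiffOn ℝ 2 φ (Icc a b))
    (hfa : f a = 0) (hfb : f b = 0) (hφa : φ a = 0) (hφb : φ b = 0)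
    (h : ∀ s ∈ Icc a b,
      |iteratedDerivWithin 2 f (Icc a b) s| ≤ -iteratedDerivWithin 2 φ (Icc a b) s)
    (ht : t ∈ Icc a b) :
    (b - a) * derivWithin f (Icc a b) t ≤
      2 * φ t + (a + b - 2 * t) * derivWithin φ (Icc a b) t := by
  have hf' := (hf.differentiableOn two_ne_zero t ht).hasDerivWithinAt
  have hφ' := (hφ.differentiableOn two_ne_zero t ht).hasDerivWithinAt
  have hadd := concaveOn_le_add_mul_sub
    (concaveOn_add_of_abs_iteratedDerivWithin_two_le hab hf hφ h) ht (left_mem_Icc.2 hab.le)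
    (hφ'.add hf')
  have hsub := concaveOn_le_add_mul_sub
    (concaveOn_sub_of_abs_iteratedDerivWithin_two_le hab hf hφ h) ht (right_mem_Icc.2 hab.le)
    (hφ'.sub hf')
  simp only [Pi.add_apply, Pi.sub_apply, hfa, hfb, hφa, hφb, add_zero, sub_zero] at hadd hsub
  linarith

lemma abs_derivWithin_le_of_abs_iteratedDerivWithin_two_le (hab : a < b)
    (hf : ContDiffOn ℝ 2 f (Icc a b)) (hφ : ContDiffOn ℝ 2 φ (Icc a b))
    (hfa : f a = 0) (hfb : f b = 0) (hφa : φ a = 0) (hφb : φ b = 0)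
    (h : ∀ s ∈ Icc a b,
      |iteratedDerivWithin 2 f (Icc a b) s| ≤ -iteratedDerivWithin 2 φ (Icc a b) s)
    (ht : t ∈ Icc a b) :
    |derivWithin f (Icc a b) t| ≤
      max (derivWithin φ (Icc a b) a) (-derivWithin φ (Icc a b) b) := by
  have hφ_concave : ConcaveOn ℝ (Icc a b) φ :=
    concaveOn_of_iteratedDerivWithin_two_nonpos (convex_Icc a b) (uniqueDiffOn_Icc hab) hφ
      fun s hs => by linarith [(abs_nonneg _).trans (h s (interior_subset hs))]
  have hmax := concaveOn_two_mul_add_mul_derivWithin_le hφ_concave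
    (hφ.differentiableOn two_ne_zero) hφa hφb ht
  have hpos := mul_derivWithin_le_of_abs_iteratedDerivWithin_two_le hab hf hφ hfa hfb hφa hφb h ht
  have hneg := mul_derivWithin_le_of_abs_iteratedDerivWithin_two_le (f := -f) hab hf.neg hφ
    (by simp [hfa]) (by simp [hfb]) hφa hφb
    (by simpa only [iteratedDerivWithin_neg, abs_neg] using h) ht
  rw [derivWithin.neg] at hneg
  have hlen : 0 < b - a := sub_pos.2 hab
  exact abs_le'.2 ⟨le_of_mul_le_mul_left (hpos.trans hmax) hlen,
    le_of_mul_le_mul_left (hneg.trans hmax) hlen⟩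

end Comparison

section MajorantDerivatives

open Set

variable {a b t : ℝ}

lemma contDiffOn_const_mul_lidstoneMajorant (K a b : ℝ) (m : ℕ) (n : WithTop ℕ∞) (s : Set ℝ) :
    ContDiffOn ℝ n (fun t => K * (lidstoneMajorant a b m).eval t) s :=
  (contDiff_const.mul (contDiff_polynomial_eval _ n)).contDiffOn

lemma iteratedDerivWithin_two_const_mul_lidstoneMajorant_succ (hab : a < b) (K : ℝ) (m : ℕ)
    (ht : t ∈ Icc a b) :
    iteratedDerivWithin 2 (fun s => K * (lidstoneMajorant a b (m + 1)).eval s) (Icc a b) t =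
      -(K * (lidstoneMajorant a b m).eval t) := by
  rw [iteratedDerivWithin_const_mul_field,
    iteratedDerivWithin_polynomial_eval (uniqueDiffOn_Icc hab) _ _ ht, Function.iterate_succ_apply,
    Function.iterate_one, derivative_derivative_lidstoneMajorant_succ hab.ne, Polynomial.eval_neg,
    mul_neg]

lemma derivWithin_const_mul_lidstoneMajorant (hab : a < b) (K : ℝ) (m : ℕ)
    (ht : t ∈ Icc a b) :
    derivWithin (fun s => K * (lidstoneMajorant a b m).eval s) (Icc a b) t =
      K * (Polynomial.derivative (lidstoneMajorant a b m)).eval t :=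
  (((lidstoneMajorant a b m).hasDerivWithinAt t _).const_mul K).derivWithin
    (uniqueDiffOn_Icc hab t ht)

end MajorantDerivatives

section HomogeneousLidstoneConditions

open Set

/-- The homogeneous Lidstone boundary conditions of order `m`: `f` is `C^(2m)` on `[a, b]` and its
derivatives of order `0, 2, …, 2m - 2` vanish at both endpoints. Interpolation errors satisfy
them. -/
structure HasLidstoneZeros (m : ℕ) (a b : ℝ) (f : ℝ → ℝ) : Prop where
  contDiffOn : ContDiffOn ℝ (2 * m : ℕ) f (Icc a b)
  left : ∀ l < m, iteratedDerivWithin (2 * l) f (Icc a b) a = 0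
  right : ∀ l < m, iteratedDerivWithin (2 * l) f (Icc a b) b = 0

namespace HasLidstoneZeros

variable {m : ℕ} {a b K t : ℝ} {f : ℝ → ℝ}

lemma zero (m : ℕ) (a b : ℝ) : HasLidstoneZeros m a b 0 where
  contDiffOn := contDiffOn_const
  left := by simp
  right := by simp

lemma iteratedDerivWithin_two_mul {i : ℕ} (hab : a < b) (h : HasLidstoneZeros (m + i) a b f) :
    HasLidstoneZeros m a b (iteratedDerivWithin (2 * i) f (Icc a b)) where
  contDiffOn :=
    contDiffOn_iteratedDerivWithin (by simpa only [mul_add] using h.contDiffOn)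
      (uniqueDiffOn_Icc hab)
  left l hl := by
    rw [iteratedDerivWithin_iteratedDerivWithin, ← mul_add]
    exact h.left (l + i) (by omega)
  right l hl := by
    rw [iteratedDerivWithin_iteratedDerivWithin, ← mul_add]
    exact h.right (l + i) (by omega)

lemma contDiffOn_two (h : HasLidstoneZeros (m + 1) a b f) : ContDiffOn ℝ 2 f (Icc a b) :=
  h.contDiffOn.of_le (by norm_cast; omega)

lemma eq_zero_left (h : HasLidstoneZeros (m + 1) a b f) : f a = 0 := by
  simpa using h.left 0 m.succ_pos

lemma eq_zero_right (h : HasLidstoneZeros (m + 1) a b f) : f b = 0 := by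
  simpa using h.right 0 m.succ_pos

theorem abs_le_mul_lidstoneMajorant (hab : a < b) (h : HasLidstoneZeros m a b f)
    (hK : ∀ s ∈ Icc a b, |iteratedDerivWithin (2 * m) f (Icc a b) s| ≤ K)
    (ht : t ∈ Icc a b) : |f t| ≤ K * (lidstoneMajorant a b m).eval t := by
  induction m generalizing f t with
  | zero => simpa [lidstoneMajorant_zero_eval hab.ne] using hK t ht
  | succ m ih =>
    refine abs_le_of_abs_iteratedDerivWithin_two_le hab h.contDiffOn_two
      (contDiffOn_const_mul_lidstoneMajorant K a b (m + 1) 2 _) h.eq_zero_left h.eq_zero_right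
      (by simp [lidstoneMajorant_succ_eval_left hab.ne])
      (by simp [lidstoneMajorant_succ_eval_right hab.ne]) (fun s hs => ?_) ht
    rw [iteratedDerivWithin_two_const_mul_lidstoneMajorant_succ hab K m hs, neg_neg]
    refine ih (h.iteratedDerivWithin_two_mul (i := 1) hab) (fun r hr => ?_) hs
    rw [iteratedDerivWithin_iteratedDerivWithin]
    exact hK r hr

theorem abs_derivWithin_le (hab : a < b) (h : HasLidstoneZeros (m + 1) a b f)
    (hK : ∀ s ∈ Icc a b, |iteratedDerivWithin (2 * (m + 1)) f (Icc a b) s| ≤ K)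
    (ht : t ∈ Icc a b) :
    |derivWithin f (Icc a b) t| ≤ K * lidstoneConst (m + 1) * (b - a) ^ (2 * m + 1) := by
  have hbound := abs_derivWithin_le_of_abs_iteratedDerivWithin_two_le hab h.contDiffOn_two
    (contDiffOn_const_mul_lidstoneMajorant K a b (m + 1) 2 _) h.eq_zero_left h.eq_zero_right
    (by simp [lidstoneMajorant_succ_eval_left hab.ne])
    (by simp [lidstoneMajorant_succ_eval_right hab.ne]) (fun s hs => ?_) ht
  · rwa [derivWithin_const_mul_lidstoneMajorant hab K _ (left_mem_Icc.2 hab.le),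
      derivWithin_const_mul_lidstoneMajorant hab K _ (right_mem_Icc.2 hab.le),
      derivative_lidstoneMajorant_succ_eval_left hab.ne,
      derivative_lidstoneMajorant_succ_eval_right hab.ne, mul_neg, neg_neg, max_self, ← mul_assoc]
      at hbound
  · rw [iteratedDerivWithin_two_const_mul_lidstoneMajorant_succ hab K m hs, neg_neg]
    refine (h.iteratedDerivWithin_two_mul (i := 1) hab).abs_le_mul_lidstoneMajorant hab
      (fun r hr => ?_) hs
    rw [iteratedDerivWithin_iteratedDerivWithin]
    exact hK r hr

end HasLidstoneZeros

lemma lidstoneConst_succ_nonneg (m : ℕ) : 0 ≤ lidstoneConst (m + 1) := by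
  simpa using (HasLidstoneZeros.zero (m + 1) 0 1).abs_derivWithin_le zero_lt_one (K := 1)
    (by simp) (left_mem_Icc.2 zero_le_one)

end HomogeneousLidstoneConditions

section InterpolationError

open Set

/-- The Lidstone interpolation polynomial on `[a, b]` matching the even derivatives of `g` up to
order `2p`. These are taken within a set `S`, which for piecewise interpolation is the whole
partitioned interval. -/
noncomputable def lidstoneInterpolantOf (p : ℕ) (g : ℝ → ℝ) (S : Set ℝ) (a b : ℝ) :
    Polynomial ℝ :=
  lidstoneInterpolant p a b (fun l => iteratedDerivWithin (2 * l) g S a)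
    (fun l => iteratedDerivWithin (2 * l) g S b)

variable {p m i : ℕ} {a b u v M t : ℝ} {g L : ℝ → ℝ}

lemma iteratedDerivWithin_sub_lidstoneInterpolantOf {j : ℕ} (hab : a < b)
    (hg : ContDiffOn ℝ (2 * (p + j) : ℕ) g (Icc a b)) (ht : t ∈ Icc a b) :
    iteratedDerivWithin (2 * j)
        (fun s => g s - (lidstoneInterpolantOf (p + j) g (Icc a b) a b).eval s) (Icc a b) t =
      iteratedDerivWithin (2 * j) g (Icc a b) t -
        (lidstoneInterpolant p a b (fun l => iteratedDerivWithin (2 * (l + j)) g (Icc a b) a)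
          (fun l => iteratedDerivWithin (2 * (l + j)) g (Icc a b) b)).eval t := by
  have hsub := iteratedDerivWithin_sub ht (uniqueDiffOn_Icc hab)
    ((hg t ht).of_le (m := (2 * j : ℕ)) (by norm_cast; omega))
    (contDiff_polynomial_eval (lidstoneInterpolantOf (p + j) g (Icc a b) a b) _).contDiffWithinAt
  rw [iteratedDerivWithin_polynomial_eval (uniqueDiffOn_Icc hab) _ _ ht, lidstoneInterpolantOf,
    iterate_derivative_lidstoneInterpolant_add hab.ne] at hsub
  exact hsub

lemma hasLidstoneZeros_sub_lidstoneInterpolantOf (hab : a < b)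
    (hg : ContDiffOn ℝ (2 * p : ℕ) g (Icc a b)) :
    HasLidstoneZeros p a b
      (fun s => g s - (lidstoneInterpolantOf p g (Icc a b) a b).eval s) where
  contDiffOn := hg.sub (contDiff_polynomial_eval _ _).contDiffOn
  left l hl := by
    obtain ⟨r, rfl⟩ := Nat.exists_eq_add_of_le' hl.le
    rw [iteratedDerivWithin_sub_lidstoneInterpolantOf hab hg (left_mem_Icc.2 hab.le),
      lidstoneInterpolant_eval_left hab.ne, zero_add, sub_self]
  right l hl := by
    obtain ⟨r, rfl⟩ := Nat.exists_eq_add_of_le' hl.le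
    rw [iteratedDerivWithin_sub_lidstoneInterpolantOf hab hg (right_mem_Icc.2 hab.le),
      lidstoneInterpolant_eval_right hab.ne, zero_add, sub_self]

lemma abs_iteratedDerivWithin_sub_lidstoneInterpolantOf_le_two_mul (hab : a < b)
    (hg : ContDiffOn ℝ (2 * p : ℕ) g (Icc a b))
    (hM : ∀ s ∈ Icc a b, |iteratedDerivWithin (2 * p) g (Icc a b) s| ≤ M) (ht : t ∈ Icc a b) :
    |iteratedDerivWithin (2 * p)
      (fun s => g s - (lidstoneInterpolantOf p g (Icc a b) a b).eval s) (Icc a b) t| ≤ 2 * M := by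
  have hderiv := iteratedDerivWithin_sub_lidstoneInterpolantOf (p := 0) (j := p) hab
    (by rwa [zero_add]) ht
  rw [zero_add] at hderiv
  rw [hderiv, two_mul M]
  refine (abs_sub _ _).trans (add_le_add (hM t ht)
    (abs_lidstoneInterpolant_zero_eval_le hab ht ?_ ?_))
  · rw [zero_add]
    exact hM a (left_mem_Icc.2 hab.le)
  · rw [zero_add]
    exact hM b (right_mem_Icc.2 hab.le)

theorem abs_iteratedDerivWithin_odd_sub_lidstoneInterpolantOf_le (hab : a < b)
    (hg : ContDiffOn ℝ (2 * (m + 1 + i) : ℕ) g (Icc a b))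
    (hM : ∀ s ∈ Icc a b, |iteratedDerivWithin (2 * (m + 1 + i)) g (Icc a b) s| ≤ M)
    (ht : t ∈ Icc a b) :
    |iteratedDerivWithin (2 * i + 1)
      (fun s => g s - (lidstoneInterpolantOf (m + 1 + i) g (Icc a b) a b).eval s) (Icc a b) t| ≤
      2 * M * lidstoneConst (m + 1) * (b - a) ^ (2 * m + 1) := by
  rw [iteratedDerivWithin_succ]
  refine ((hasLidstoneZeros_sub_lidstoneInterpolantOf hab hg).iteratedDerivWithin_two_mul
    hab).abs_derivWithin_le hab (fun s hs => ?_) ht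
  rw [iteratedDerivWithin_iteratedDerivWithin, ← mul_add]
  exact abs_iteratedDerivWithin_sub_lidstoneInterpolantOf_le_two_mul hab hg hM hs

lemma lidstoneInterpolantOf_eq_of_Icc_subset (hab : a < b) (huv : Icc a b ⊆ Icc u v)
    (hg : ContDiffOn ℝ (2 * p : ℕ) g (Icc u v)) :
    lidstoneInterpolantOf p g (Icc a b) a b = lidstoneInterpolantOf p g (Icc u v) a b := by
  have huv' : u < v :=
    (huv (left_mem_Icc.2 hab.le)).1.trans_lt (hab.trans_le (huv (right_mem_Icc.2 hab.le)).2)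
  simp only [lidstoneInterpolantOf, lidstoneInterpolant]
  refine Finset.sum_congr rfl fun l hl => ?_
  have hg' : ContDiffOn ℝ (2 * l : ℕ) g (Icc u v) :=
    hg.of_le (by norm_cast; have := Finset.mem_range.1 hl; omega)
  simp only [iteratedDerivWithin_subset huv (uniqueDiffOn_Icc hab) (uniqueDiffOn_Icc huv') hg'
    (left_mem_Icc.2 hab.le), iteratedDerivWithin_subset huv (uniqueDiffOn_Icc hab)
    (uniqueDiffOn_Icc huv') hg' (right_mem_Icc.2 hab.le)]

theorem abs_iteratedDerivWithin_odd_sub_le_of_eqOn_lidstoneInterpolantOf (hab : a < b) (hua : u ≤ a)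
    (hbv : b ≤ v) (hg : ContDiffOn ℝ (2 * (m + 1 + i) : ℕ) g (Icc u v))
    (hM : ∀ s ∈ Icc u v, |iteratedDerivWithin (2 * (m + 1 + i)) g (Icc u v) s| ≤ M)
    (hL : EqOn L (fun s => (lidstoneInterpolantOf (m + 1 + i) g (Icc u v) a b).eval s) (Icc a b))
    (ht : t ∈ Ioo a b) :
    |iteratedDerivWithin (2 * i + 1) (fun s => g s - L s) (Icc u v) t| ≤
      2 * M * lidstoneConst (m + 1) * (b - a) ^ (2 * m + 1) := by
  have hsub : Icc a b ⊆ Icc u v := Icc_subset_Icc hua hbv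
  have hnhds : Icc a b ∈ nhds t := Icc_mem_nhds ht.1 ht.2
  have hset : Icc u v =ᶠ[nhds t] Icc a b :=
    (Filter.eventuallyEq_univ.2 (Filter.mem_of_superset hnhds hsub)).trans
      (Filter.eventuallyEq_univ.2 hnhds).symm
  have hcongr : EqOn (fun s => g s - L s)
      (fun s => g s - (lidstoneInterpolantOf (m + 1 + i) g (Icc a b) a b).eval s) (Icc a b) :=
    fun s hs => by simp only [hL hs, lidstoneInterpolantOf_eq_of_Icc_subset hab hsub hg]
  rw [iteratedDerivWithin_congr_set hset,
    iteratedDerivWithin_congr hcongr (Ioo_subset_Icc_self ht)]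
  refine abs_iteratedDerivWithin_odd_sub_lidstoneInterpolantOf_le hab (hg.mono hsub)
    (fun s hs => ?_) (Ioo_subset_Icc_self ht)
  rw [iteratedDerivWithin_subset hsub (uniqueDiffOn_Icc hab)
    (uniqueDiffOn_Icc (hua.trans_lt (hab.trans_le hbv))) hg hs]
  exact hM s (hsub hs)

end InterpolationError

/-- For `p ≥ 1` and odd `k = 2i+1` with `0 ≤ i ≤ p-1`, the piecewise Lidstone
interpolant `Lg` of a `2p`-times continuously differentiable function `g` satisfies
`|(g - Lg)^(k)| ≤ 2 d ‖g^(2p)‖_∞ ‖Δ‖^(2p-k)` on every open subinterval, where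
`d = (-1)^(p-i+1) · 2(2^(2p-2i) - 1) · B_(2p-2i) / (2p-2i)!` with `B_m` the `m`-th
Bernoulli number, `M = ‖g^(2p)‖_∞` and `δ = ‖Δ‖` is the mesh of the partition. -/
theorem piecewise_lidstone_interpolation_error_odd (Λ : ℕ → ℝ → ℝ) (hΛ : LidstoneProp Λ)
    (p i : ℕ) (hp : 1 ≤ p) (hi : i ≤ p - 1)
    (N : ℕ) (hN : 1 ≤ N) (x : ℕ → ℝ) (hx : ∀ n < N, x n < x (n + 1))
    (g Lg : ℝ → ℝ)
    (hg : ContDiffOn ℝ (2 * p) g (Set.Icc (x 0) (x N)))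
    (hLg : ∀ n, 1 ≤ n → n ≤ N → ∀ t ∈ Set.Icc (x (n - 1)) (x n),
      Lg t = ∑ l ∈ Finset.range (p + 1),
        (iteratedDerivWithin (2 * l) g (Set.Icc (x 0) (x N)) (x (n - 1)) *
            Λ l ((x n - t) / (x n - x (n - 1))) +
          iteratedDerivWithin (2 * l) g (Set.Icc (x 0) (x N)) (x n) *
            Λ l ((t - x (n - 1)) / (x n - x (n - 1)))) *
          (x n - x (n - 1)) ^ (2 * l))
    (M δ : ℝ)
    (hM : IsLUB ((fun t => |iteratedDerivWithin (2 * p) g (Set.Icc (x 0) (x N)) t|) ''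
      Set.Icc (x 0) (x N)) M)
    (hδ : IsGreatest {d : ℝ | ∃ n, 1 ≤ n ∧ n ≤ N ∧ d = x n - x (n - 1)} δ) :
    ∀ n, 1 ≤ n → n ≤ N → ∀ t ∈ Set.Ioo (x (n - 1)) (x n),
      |iteratedDerivWithin (2 * i + 1) (fun s => g s - Lg s) (Set.Icc (x 0) (x N)) t| ≤
        2 * ((-1 : ℝ) ^ (p - i + 1) * (2 * ((2 : ℝ) ^ (2 * p - 2 * i) - 1)) *
            ((bernoulli (2 * p - 2 * i) : ℚ) : ℝ) / (Nat.factorial (2 * p - 2 * i))) *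
          M * δ ^ (2 * p - (2 * i + 1)) := by
  intro n hn hnN t ht
  obtain ⟨m, rfl⟩ : ∃ m, p = m + 1 + i := ⟨p - i - 1, by omega⟩
  have hmono : MonotoneOn x (Set.Icc 0 N) :=
    (strictMonoOn_of_lt_add_one Set.ordConnected_Icc fun k _ _ hk => hx k hk.2).monotoneOn
  have hab : x (n - 1) < x n := ht.1.trans ht.2
  have hL : Set.EqOn Lg (fun s => (lidstoneInterpolantOf (m + 1 + i) g (Set.Icc (x 0) (x N))
      (x (n - 1)) (x n)).eval s) (Set.Icc (x (n - 1)) (x n)) := fun s hs => by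
    simp only [hLg n hn hnN s hs, hΛ.eq_eval_lidstonePoly, lidstoneInterpolantOf,
      lidstoneInterpolant_eval]
  have herror := abs_iteratedDerivWithin_odd_sub_le_of_eqOn_lidstoneInterpolantOf hab
    (hmono ⟨le_rfl, N.zero_le⟩ ⟨(n - 1).zero_le, by omega⟩ (n - 1).zero_le)
    (hmono ⟨n.zero_le, hnN⟩ ⟨N.zero_le, le_rfl⟩ hnN) (mod_cast hg)
    (fun s hs => hM.1 ⟨s, hs, rfl⟩) hL ht
  have hmesh : x n - x (n - 1) ≤ δ := hδ.2 ⟨n, hn, hnN, rfl⟩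
  have hM₀ : 0 ≤ M := (abs_nonneg _).trans
    (hM.1 ⟨x 0, ⟨le_rfl, hmono ⟨le_rfl, N.zero_le⟩ ⟨N.zero_le, le_rfl⟩ N.zero_le⟩, rfl⟩)
  rw [show 2 * (m + 1 + i) - 2 * i = 2 * (m + 1) by omega, Nat.add_sub_cancel,
    show 2 * (m + 1 + i) - (2 * i + 1) = 2 * m + 1 by omega, ← lidstoneConst, mul_right_comm 2]
  refine herror.trans (mul_le_mul_of_nonneg_left ?_ ?_)
  · exact pow_le_pow_left₀ (sub_nonneg.2 hab.le) hmesh _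
  · have := lidstoneConst_succ_nonneg m
    positivity
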